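/- Let C be an entropy space, λ : C → C a lower map and α ∈ C. Then h(λ, α) = lim_{n→∞} (1/n)·h(α_0^{n-1}) = inf_{n≥1} (1/n)·h(α_0^{n-1}); in particular the limit exists. Moreover, if h(β) < ∞ for every β ∈ C, then h(λ, α) < ∞. -/

import Mathlib

open Filter ENNReal Topology

/-- An *entropy space*: a pre-ordered semigroup `(C, ≺, ∧)` satisfying (C1) and (C2),
together with an entropy function `h : C → [0,∞]` satisfying (H1) and (H2). -/
structure EntropySpace (C : Type*) where
  prec : C → C → Prop
  meet : C → C → C
  h : C → ℝ≥0∞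
  prec_refl : ∀ a, prec a a
  prec_trans : ∀ a b c, prec a b → prec b c → prec a c
  meet_assoc : ∀ a b c, meet (meet a b) c = meet a (meet b c)
  c1_left : ∀ a b, prec (meet a b) a
  c1_right : ∀ a b, prec (meet a b) b
  c2 : ∀ a a' b b', prec a a' → prec b b' → prec (meet a b) (meet a' b')
  h1 : ∀ a b, prec a b → h b ≤ h a
  h2 : ∀ a b, h (meet a b) ≤ h a + h b

variable {C : Type*}

/-- `α_0^n[λ] = α ∧ λα ∧ ⋯ ∧ λ^n α` (a product of `n + 1` factors). -/
def EntropySpace.orbitProd (E : EntropySpace C) (l : C → C) (a : C) : ℕ → C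
  | 0 => a
  | n + 1 => E.meet (E.orbitProd l a n) (l^[n + 1] a)

/-- `h(λ, α) = limsup_{n → ∞} (1/n) · h(α_0^{n-1}[λ])`, computed in `[0,∞]`. -/
noncomputable def EntropySpace.relEntropy (E : EntropySpace C) (l : C → C) (a : C) : ℝ≥0∞ :=
  Filter.atTop.limsup fun n : ℕ => E.h (E.orbitProd l a n) / ((n : ℝ≥0∞) + 1)

/-- `h(λ) = sup_{α ∈ C} h(λ, α)`. -/
noncomputable def EntropySpace.entropy (E : EntropySpace C) (l : C → C) : ℝ≥0∞ :=
  ⨆ a : C, E.relEntropy l a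

/-!
Since `λ(α_0^{n-1}) ≺ λα ∧ ⋯ ∧ λ^nα` by (L1), the laws (H1) and (L2) show that shifting a block of
the orbit by one step does not increase its entropy, so by (H2) the sequence `n ↦ h(α_0^{n-1})` is
subadditive and Fekete's lemma applies. Fekete's lemma in `[0,∞]` needs finite terms: if `h(α) < ∞`,
subadditivity makes every term finite, and if `h(α) = ∞`, every term is infinite by (C1) and (H1).
-/

section Fekete

variable {u : ℕ → ℝ≥0∞}

theorem ne_top_of_subadditive (hu : ∀ m n, u (m + n) ≤ u m + u n) (h_one : u 1 ≠ ⊤) {n : ℕ}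
    (hn : 1 ≤ n) : u n ≠ ⊤ := by
  induction n, hn using Nat.le_induction with
  | base => exact h_one
  | succ n _ ih => exact ne_top_of_le_ne_top (add_ne_top.2 ⟨ih, h_one⟩) (hu n 1)

theorem subadditive_toReal (hu : ∀ m n, u (m + n) ≤ u m + u n) (h_one : u 1 ≠ ⊤) :
    Subadditive fun n => (u n).toReal := by
  intro m n
  rcases m.eq_zero_or_pos with rfl | hm
  · simp
  rcases n.eq_zero_or_pos with rfl | hn
  · simp
  have hm_top : u m ≠ ⊤ := ne_top_of_subadditive hu h_one hm
  have hn_top : u n ≠ ⊤ := ne_top_of_subadditive hu h_one hn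
  exact (toReal_mono (add_ne_top.2 ⟨hm_top, hn_top⟩) (hu m n)).trans_eq
    (toReal_add hm_top hn_top)

theorem tendsto_div_iInf_of_subadditive (hu : ∀ m n, u (m + n) ≤ u m + u n) (h_one : u 1 ≠ ⊤) :
    Tendsto (fun n : ℕ => u n / n) atTop (𝓝 (⨅ n ≥ 1, u n / (n : ℝ≥0∞))) := by
  have hsub : Subadditive fun n => (u n).toReal := subadditive_toReal hu h_one
  have hbdd : BddBelow (Set.range fun n : ℕ => (u n).toReal / n) :=
    ⟨0, Set.forall_mem_range.2 fun n => by positivity⟩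
  have hdiv : ∀ n : ℕ, 1 ≤ n → ENNReal.ofReal ((u n).toReal / n) = u n / n := fun n hn => by
    rw [ofReal_div_of_pos (Nat.cast_pos.2 hn), ofReal_natCast,
      ofReal_toReal (ne_top_of_subadditive hu h_one hn)]
  have hlim : Tendsto (fun n : ℕ => u n / n) atTop (𝓝 (ENNReal.ofReal hsub.lim)) :=
    (tendsto_ofReal (hsub.tendsto_lim hbdd)).congr' ((eventually_ge_atTop 1).mono hdiv)
  have hlim_eq : ENNReal.ofReal hsub.lim = ⨅ n ≥ 1, u n / (n : ℝ≥0∞) := by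
    refine le_antisymm (le_iInf₂ fun n hn => ?_)
      (ge_of_tendsto hlim ((eventually_ge_atTop 1).mono fun n hn => iInf₂_le n hn))
    rw [← hdiv n hn]
    exact ofReal_le_ofReal (hsub.lim_le_div hbdd (Nat.one_le_iff_ne_zero.1 hn))
  exact hlim_eq ▸ hlim

end Fekete

namespace EntropySpace

theorem orbitProd_add_add_one (E : EntropySpace C) (l : C → C) (a : C) (m n : ℕ) :
    E.orbitProd l a (m + n + 1) =
      E.meet (E.orbitProd l a m) (E.orbitProd l (l^[m + 1] a) n) := by
  induction n with
  | zero => rfl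
  | succ n ih =>
    have hiter : l^[m + (n + 1) + 1] a = l^[n + 1] (l^[m + 1] a) := by
      rw [← Function.iterate_add_apply, add_right_comm, add_comm]
    calc E.orbitProd l a (m + (n + 1) + 1)
        = E.meet (E.orbitProd l a (m + n + 1)) (l^[m + (n + 1) + 1] a) := rfl
      _ = E.meet (E.orbitProd l a m)
            (E.meet (E.orbitProd l (l^[m + 1] a) n) (l^[n + 1] (l^[m + 1] a))) := by
          rw [ih, E.meet_assoc, hiter]

theorem orbitProd_prec_self (E : EntropySpace C) (l : C → C) (a : C) (n : ℕ) :
    E.prec (E.orbitProd l a n) a := by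
  induction n with
  | zero => exact E.prec_refl a
  | succ n ih => exact E.prec_trans _ _ _ (E.c1_left _ _) ih

variable {E : EntropySpace C} {l : C → C}

theorem map_orbitProd_prec (hl1 : ∀ a b, E.prec (l (E.meet a b)) (E.meet (l a) (l b)))
    (a : C) (n : ℕ) : E.prec (l (E.orbitProd l a n)) (E.orbitProd l (l a) n) := by
  induction n with
  | zero => exact E.prec_refl _
  | succ n ih =>
    have hiter : E.prec (l (l^[n + 1] a)) (l^[n + 1] (l a)) := by
      rw [(Function.Commute.self_iterate l (n + 1)).eq]
      exact E.prec_refl _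
    exact E.prec_trans _ _ _ (hl1 _ _) (E.c2 _ _ _ _ ih hiter)

theorem h_orbitProd_iterate_le (hl1 : ∀ a b, E.prec (l (E.meet a b)) (E.meet (l a) (l b)))
    (hl2 : ∀ a, E.h (l a) ≤ E.h a) (a : C) (n k : ℕ) :
    E.h (E.orbitProd l (l^[k] a) n) ≤ E.h (E.orbitProd l a n) := by
  induction k with
  | zero => exact le_rfl
  | succ k ih =>
    calc E.h (E.orbitProd l (l^[k + 1] a) n)
        = E.h (E.orbitProd l (l (l^[k] a)) n) := by rw [Function.iterate_succ_apply']
      _ ≤ E.h (l (E.orbitProd l (l^[k] a) n)) := E.h1 _ _ (map_orbitProd_prec hl1 _ n)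
      _ ≤ E.h (E.orbitProd l (l^[k] a) n) := hl2 _
      _ ≤ E.h (E.orbitProd l a n) := ih

theorem h_orbitProd_add_add_one_le
    (hl1 : ∀ a b, E.prec (l (E.meet a b)) (E.meet (l a) (l b)))
    (hl2 : ∀ a, E.h (l a) ≤ E.h a) (a : C) (m n : ℕ) :
    E.h (E.orbitProd l a (m + n + 1)) ≤ E.h (E.orbitProd l a m) + E.h (E.orbitProd l a n) :=
  calc E.h (E.orbitProd l a (m + n + 1))
      = E.h (E.meet (E.orbitProd l a m) (E.orbitProd l (l^[m + 1] a) n)) := by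
        rw [orbitProd_add_add_one]
    _ ≤ E.h (E.orbitProd l a m) + E.h (E.orbitProd l (l^[m + 1] a) n) := E.h2 _ _
    _ ≤ E.h (E.orbitProd l a m) + E.h (E.orbitProd l a n) := by
        gcongr
        exact h_orbitProd_iterate_le hl1 hl2 a n (m + 1)

-- Truncated subtraction makes the value at `0` a copy of the value at `1`, so that subadditivity
-- holds at all indices.
theorem h_orbitProd_add_sub_one_le
    (hl1 : ∀ a b, E.prec (l (E.meet a b)) (E.meet (l a) (l b)))
    (hl2 : ∀ a, E.h (l a) ≤ E.h a) (a : C) (m n : ℕ) :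
    E.h (E.orbitProd l a (m + n - 1)) ≤
      E.h (E.orbitProd l a (m - 1)) + E.h (E.orbitProd l a (n - 1)) := by
  rcases m with _ | m
  · simp
  rcases n with _ | n
  · simp
  have hindex : m + 1 + (n + 1) - 1 = m + n + 1 := by omega
  rw [hindex]
  exact h_orbitProd_add_add_one_le hl1 hl2 a m n

theorem h_orbitProd_eq_top {a : C} (ha : E.h a = ⊤) (n : ℕ) : E.h (E.orbitProd l a n) = ⊤ :=
  top_le_iff.1 (ha.ge.trans (E.h1 _ _ (E.orbitProd_prec_self l a n)))

theorem tendsto_h_orbitProd_div_iInf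
    (hl1 : ∀ a b, E.prec (l (E.meet a b)) (E.meet (l a) (l b)))
    (hl2 : ∀ a, E.h (l a) ≤ E.h a) (a : C) :
    Tendsto (fun n : ℕ => E.h (E.orbitProd l a n) / ((n : ℝ≥0∞) + 1)) atTop
      (𝓝 (⨅ n : ℕ, E.h (E.orbitProd l a n) / ((n : ℝ≥0∞) + 1))) := by
  by_cases ha : E.h a = ⊤
  · have hdiv_top : ∀ n : ℕ, E.h (E.orbitProd l a n) / ((n : ℝ≥0∞) + 1) = ⊤ := fun n => by
      rw [h_orbitProd_eq_top ha, top_div_of_ne_top (by finiteness)]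
    simp only [hdiv_top, iInf_const]
    exact tendsto_const_nhds
  · have hfekete := tendsto_div_iInf_of_subadditive (h_orbitProd_add_sub_one_le hl1 hl2 a) ha
    rw [iInf_ge_eq_iInf_nat_add, ← tendsto_add_atTop_iff_nat 1] at hfekete
    simpa only [Nat.add_sub_cancel, Nat.cast_add_one] using hfekete

end EntropySpace

theorem stmt_3_general (E : EntropySpace C) (l : C → C)
    (hl1 : ∀ a b, E.prec (l (E.meet a b)) (E.meet (l a) (l b)))
    (hl2 : ∀ a, E.h (l a) ≤ E.h a)
    (a : C) :
    Tendsto (fun n : ℕ => E.h (E.orbitProd l a n) / ((n : ℝ≥0∞) + 1)) atTop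
      (𝓝 (E.relEntropy l a)) ∧
    (E.relEntropy l a = ⨅ n : ℕ, E.h (E.orbitProd l a n) / ((n : ℝ≥0∞) + 1)) ∧
    E.relEntropy l a ≤ E.h a := by
  have hlim := EntropySpace.tendsto_h_orbitProd_div_iInf hl1 hl2 a
  have heq : E.relEntropy l a = ⨅ n : ℕ, E.h (E.orbitProd l a n) / ((n : ℝ≥0∞) + 1) :=
    hlim.limsup_eq
  refine ⟨heq ▸ hlim, heq, ?_⟩
  calc E.relEntropy l a
      ≤ E.h (E.orbitProd l a 0) / (((0 : ℕ) : ℝ≥0∞) + 1) := heq.trans_le (iInf_le _ 0)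
    _ = E.h a := by simp [EntropySpace.orbitProd]

/-- If `λ` is a lower map, then `h(λ, α)` is a limit and equals the infimum
`inf_{n ≥ 1} (1/n) h(α_0^{n-1})`; moreover it is finite whenever `h` is finite. -/
theorem stmt_3 (E : EntropySpace C) (l : C → C)
    (hmono : ∀ a b, E.prec a b → E.prec (l a) (l b))
    (hl1 : ∀ a b, E.prec (l (E.meet a b)) (E.meet (l a) (l b)))
    (hl2 : ∀ a, E.h (l a) ≤ E.h a)
    (a : C) :
    Tendsto (fun n : ℕ => E.h (E.orbitProd l a n) / ((n : ℝ≥0∞) + 1)) atTop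
      (𝓝 (E.relEntropy l a)) ∧
    (E.relEntropy l a = ⨅ n : ℕ, E.h (E.orbitProd l a n) / ((n : ℝ≥0∞) + 1)) ∧
    ((∀ b : C, E.h b < ⊤) → E.relEntropy l a < ⊤) :=
  have ⟨hlim, heq, hle⟩ := stmt_3_general E l hl1 hl2 a
  ⟨hlim, heq, fun hfin => hle.trans_lt (hfin a)⟩
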